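/- The logic BD⊃,F is normal, i.e. its logical consequence relation ⊨ satisfies, for all sets of formulas Γ, Δ, all formulas A, A1, A2, and all variables x: (i) for every atomic formula A whose predicate symbol is not =, not A ⊨ {¬A} and not ¬A ⊨ {A}; (ii) Γ ⊨ Δ ∪ {A1 ∧ A2} iff (Γ ⊨ Δ ∪ {A1} and Γ ⊨ Δ ∪ {A2}); (iii) Γ ∪ {A1 ∨ A2} ⊨ Δ iff (Γ ∪ {A1} ⊨ Δ and Γ ∪ {A2} ⊨ Δ); (iv) Γ ⊨ Δ ∪ {A1 ⊃ A2} iff Γ ∪ {A1} ⊨ Δ ∪ {A2}; (v) Γ ⊨ Δ ∪ {∀x.A} iff Γ ⊨ Δ ∪ {A}, provided x is not free in any formula of Γ ∪ Δ; (vi) Γ ∪ {∃x.A} ⊨ Δ iff Γ ∪ {A} ⊨ Δ, provided x is not free in any formula of Γ ∪ Δ. -/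

import Mathlib

/-!
Apart from negation, the truth functions of BD⊃,F act classically on designation: a conjunction is designated iff both
conjuncts are, a disjunction iff one disjunct is, an implication iff designation of the antecedent
forces that of the consequent, and the infimum (supremum) of a set of truth values is designated iff
all (some) of its elements are (`tand_desig`, `tor_desig`, `timp_desig`, `tInf_desig`, `tSup_desig`).
The propositional clauses of normality are then classical reasoning about designation.

The quantifier clauses also need the coincidence lemma `Formula.val_congr`: re-assigning a variable
that is not free in `Γ ∪ Δ` changes none of the values of the formulas in `Γ ∪ Δ`.

The first clause is witnessed by a one-point structure in which a single predicate symbol, different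
from equality, has a prescribed truth value and every other predicate symbol is constantly `t`.
-/

namespace BD

inductive V4 : Type
  | t | b | n | f
deriving DecidableEq

def Desig : Set V4 := {V4.t, V4.b}

def tnot : V4 → V4
  | .t => .f
  | .f => .t
  | .b => .b
  | .n => .n

def tand : V4 → V4 → V4
  | .f, _ => .f
  | _, .f => .f
  | .t, a => a
  | a, .t => a
  | .b, .b => .b
  | .n, .n => .n
  | .b, .n => .f
  | .n, .b => .f

def tor : V4 → V4 → V4
  | .t, _ => .t
  | _, .t => .t
  | .f, a => a
  | a, .f => a
  | .b, .b => .b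
  | .n, .n => .n
  | .b, .n => .t
  | .n, .b => .t

def timp : V4 → V4 → V4
  | .t, a => a
  | .b, a => a
  | .n, _ => .t
  | .f, _ => .t

open Classical in
noncomputable def tInf (V : Set V4) : V4 :=
  if V4.f ∈ V ∨ (V4.b ∈ V ∧ V4.n ∈ V) then .f
  else if V4.b ∈ V then .b
  else if V4.n ∈ V then .n
  else .t

open Classical in
noncomputable def tSup (V : Set V4) : V4 :=
  if V4.t ∈ V ∨ (V4.b ∈ V ∧ V4.n ∈ V) then .t
  else if V4.b ∈ V then .b
  else if V4.n ∈ V then .n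
  else .f

/-- A first-order signature with a distinguished binary equality predicate. -/
structure Signature where
  Func : ℕ → Type
  Pred : ℕ → Type
  eq : Pred 2

/-- Terms over a signature, with natural numbers as variables. -/
inductive Term (σ : Signature) : Type
  | var : ℕ → Term σ
  | func : {k : ℕ} → σ.Func k → (Fin k → Term σ) → Term σ

/-- Formulas of BD⊃,F over a signature. -/
inductive Formula (σ : Signature) : Type
  | pred : {k : ℕ} → σ.Pred k → (Fin k → Term σ) → Formula σ
  | fls : Formula σ
  | neg : Formula σ → Formula σ
  | conj : Formula σ → Formula σ → Formula σ
  | disj : Formula σ → Formula σ → Formula σ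
  | imp : Formula σ → Formula σ → Formula σ
  | all : ℕ → Formula σ → Formula σ
  | ex : ℕ → Formula σ → Formula σ

variable {σ : Signature}

/-- A structure for the language: nonempty domain, interpretations of function and
predicate symbols, with equality designated on the diagonal. -/
structure Struc (σ : Signature) where
  U : Type
  uNonempty : Nonempty U
  funcI : {k : ℕ} → σ.Func k → (Fin k → U) → U
  predI : {k : ℕ} → σ.Pred k → (Fin k → U) → V4
  eqDesig : ∀ d : U, predI σ.eq ![d, d] ∈ Desig

/-- Value of a term in a structure under an assignment. -/
def Term.val (A : Struc σ) (α : ℕ → A.U) : Term σ → A.U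
  | .var x => α x
  | .func g ts => A.funcI g (fun i => (ts i).val A α)

/-- Truth value of a formula in a structure under an assignment. -/
noncomputable def Formula.val (A : Struc σ) : (ℕ → A.U) → Formula σ → V4
  | α, .pred P ts => A.predI P (fun i => (ts i).val A α)
  | _, .fls => .f
  | α, .neg B => tnot (B.val A α)
  | α, .conj B C => tand (B.val A α) (C.val A α)
  | α, .disj B C => tor (B.val A α) (C.val A α)
  | α, .imp B C => timp (B.val A α) (C.val A α)
  | α, .all x B => tInf (Set.range fun d : A.U => B.val A (Function.update α x d))
  | α, .ex x B => tSup (Set.range fun d : A.U => B.val A (Function.update α x d))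

/-- Logical consequence in BD⊃,F. -/
def Conseq (Γ Δ : Set (Formula σ)) : Prop :=
  ∀ (A : Struc σ) (α : ℕ → A.U),
    (∀ B ∈ Γ, B.val A α ∈ Desig) → ∃ C ∈ Δ, C.val A α ∈ Desig

/-- Logical consequence restricted to structures whose predicate (and proposition)
symbols take values in `S`. -/
def ConseqOn (S : Set V4) (Γ Δ : Set (Formula σ)) : Prop :=
  ∀ A : Struc σ, (∀ (k : ℕ) (P : σ.Pred k) (ds : Fin k → A.U), A.predI P ds ∈ S) →
    ∀ α : ℕ → A.U,
      (∀ B ∈ Γ, B.val A α ∈ Desig) → ∃ C ∈ Δ, C.val A α ∈ Desig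

/-- The (finitely many) free variables of a term. -/
def Term.fv : Term σ → Finset ℕ
  | .var x => {x}
  | .func _ ts => Finset.univ.biUnion fun i => (ts i).fv

/-- The free variables of a formula. -/
def Formula.fv : Formula σ → Finset ℕ
  | .pred _ ts => Finset.univ.biUnion fun i => (ts i).fv
  | .fls => ∅
  | .neg B => B.fv
  | .conj B C => B.fv ∪ C.fv
  | .disj B C => B.fv ∪ C.fv
  | .imp B C => B.fv ∪ C.fv
  | .all x B => B.fv.erase x
  | .ex x B => B.fv.erase x

/-- Logical equivalence in BD⊃,F. -/
def LogEquiv (A₁ A₂ : Formula σ) : Prop :=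
  ∀ (A : Struc σ) (α : ℕ → A.U), A₁.val A α = A₂.val A α

lemma tand_desig (a c : V4) : tand a c ∈ Desig ↔ a ∈ Desig ∧ c ∈ Desig := by
  cases a <;> cases c <;> simp [tand, Desig]

lemma tor_desig (a c : V4) : tor a c ∈ Desig ↔ a ∈ Desig ∨ c ∈ Desig := by
  cases a <;> cases c <;> simp [tor, Desig]

lemma timp_desig (a c : V4) : timp a c ∈ Desig ↔ (a ∈ Desig → c ∈ Desig) := by
  cases a <;> cases c <;> simp [timp, Desig]

lemma tInf_desig (V : Set V4) : tInf V ∈ Desig ↔ ∀ v ∈ V, v ∈ Desig := by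
  have key : (∀ v ∈ V, v ∈ Desig) ↔ V4.n ∉ V ∧ V4.f ∉ V := by
    constructor
    · intro h
      exact ⟨fun hn => by simpa [Desig] using h _ hn, fun hf => by simpa [Desig] using h _ hf⟩
    · rintro ⟨hn, hf⟩ v hv
      cases v <;> simp_all [Desig]
  rw [key, tInf]
  split_ifs <;> simp [Desig] <;> tauto

lemma tSup_desig (V : Set V4) : tSup V ∈ Desig ↔ ∃ v ∈ V, v ∈ Desig := by
  have key : (∃ v ∈ V, v ∈ Desig) ↔ V4.t ∈ V ∨ V4.b ∈ V := by
    simp only [Desig, Set.mem_insert_iff, Set.mem_singleton_iff]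
    constructor
    · rintro ⟨v, hv, rfl | rfl⟩ <;> tauto
    · rintro (h | h)
      · exact ⟨_, h, Or.inl rfl⟩
      · exact ⟨_, h, Or.inr rfl⟩
  rw [key, tSup]
  split_ifs <;> simp [Desig] <;> tauto

lemma Term.val_congr (A : Struc σ) (α β : ℕ → A.U) (s : Term σ)
    (h : ∀ x ∈ s.fv, α x = β x) : s.val A α = s.val A β := by
  induction s with
  | var x => exact h x (by simp [Term.fv])
  | func g ts ih =>
    simp only [Term.val]
    congr 1
    funext i
    exact ih i fun x hx => h x (by simpa [Term.fv] using ⟨i, hx⟩)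

/-- Coincidence lemma: the truth value of a formula depends only on the values that the assignment
gives to its free variables. -/
lemma Formula.val_congr (A : Struc σ) (B : Formula σ) (α β : ℕ → A.U)
    (h : ∀ x ∈ B.fv, α x = β x) : B.val A α = B.val A β := by
  have upd (C : Formula σ) (α β : ℕ → A.U) (x : ℕ) (h : ∀ y ∈ C.fv.erase x, α y = β y) (d : A.U) :
      ∀ y ∈ C.fv, Function.update α x d y = Function.update β x d y := by
    intro y hy
    by_cases hyx : y = x
    · subst hyx; simp
    · simpa [hyx] using h y (Finset.mem_erase.2 ⟨hyx, hy⟩)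
  induction B generalizing α β with
  | pred P ts =>
    simp only [Formula.val]
    congr 1
    funext i
    exact Term.val_congr A α β _ fun x hx => h x (by simpa [Formula.fv] using ⟨i, hx⟩)
  | fls => rfl
  | neg B ih => simp only [Formula.val]; rw [ih α β h]
  | conj B C ihB ihC | disj B C ihB ihC | imp B C ihB ihC =>
    simp only [Formula.val]
    rw [ihB α β fun x hx => h x (by simp [Formula.fv, hx]),
      ihC α β fun x hx => h x (by simp [Formula.fv, hx])]
  | all x B ih | ex x B ih =>
    simp only [Formula.val]
    congr 2
    funext d
    exact ih _ _ (upd B α β x h d)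

lemma Formula.val_update (A : Struc σ) (B : Formula σ) (α : ℕ → A.U) (x : ℕ) (d : A.U)
    (h : x ∉ B.fv) : B.val A (Function.update α x d) = B.val A α :=
  Formula.val_congr A B _ _ fun y hy =>
    Function.update_of_ne (fun e : y = x => h (e ▸ hy)) _ _

open Classical in
/-- The one-point structure in which the predicate symbol `P`, different from equality, has the
constant value `v` and all other predicate symbols have the constant value `t`. -/
noncomputable def pointStruc {k : ℕ} (P : σ.Pred k) (v : V4)
    (hP : (⟨k, P⟩ : Σ m, σ.Pred m) ≠ ⟨2, σ.eq⟩) : Struc σ where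
  U := Unit
  uNonempty := ⟨()⟩
  funcI := fun _ _ => ()
  predI := fun {m} Q _ => if (⟨k, P⟩ : Σ m, σ.Pred m) = ⟨m, Q⟩ then v else .t
  eqDesig := fun _ => by simp [hP, Desig]

lemma conseq_union_right (Γ Δ : Set (Formula σ)) (C : Formula σ) :
    Conseq Γ (Δ ∪ {C}) ↔ ∀ (A : Struc σ) (α : ℕ → A.U), (∀ B ∈ Γ, B.val A α ∈ Desig) →
      (∃ B ∈ Δ, B.val A α ∈ Desig) ∨ C.val A α ∈ Desig := by
  simp only [Conseq, Set.mem_union, Set.mem_singleton_iff, or_and_right, exists_or,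
    exists_eq_left]

lemma conseq_union_left (Γ Δ : Set (Formula σ)) (C : Formula σ) :
    Conseq (Γ ∪ {C}) Δ ↔ ∀ (A : Struc σ) (α : ℕ → A.U), (∀ B ∈ Γ, B.val A α ∈ Desig) →
      C.val A α ∈ Desig → ∃ B ∈ Δ, B.val A α ∈ Desig := by
  simp only [Conseq, Set.mem_union, Set.mem_singleton_iff, or_imp, forall_and, forall_eq, and_imp]

/-- BD⊃,F is normal. -/
theorem normal (σ : Signature) :
    (∀ (k : ℕ) (P : σ.Pred k) (ts : Fin k → Term σ),
        (⟨k, P⟩ : Σ m, σ.Pred m) ≠ ⟨2, σ.eq⟩ →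
        ¬ Conseq {Formula.pred P ts} {.neg (.pred P ts)} ∧
        ¬ Conseq {Formula.neg (.pred P ts)} {Formula.pred P ts}) ∧
    (∀ (Γ Δ : Set (Formula σ)) (A₁ A₂ : Formula σ),
        Conseq Γ (Δ ∪ {.conj A₁ A₂}) ↔ Conseq Γ (Δ ∪ {A₁}) ∧ Conseq Γ (Δ ∪ {A₂})) ∧
    (∀ (Γ Δ : Set (Formula σ)) (A₁ A₂ : Formula σ),
        Conseq (Γ ∪ {.disj A₁ A₂}) Δ ↔ Conseq (Γ ∪ {A₁}) Δ ∧ Conseq (Γ ∪ {A₂}) Δ) ∧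
    (∀ (Γ Δ : Set (Formula σ)) (A₁ A₂ : Formula σ),
        Conseq Γ (Δ ∪ {.imp A₁ A₂}) ↔ Conseq (Γ ∪ {A₁}) (Δ ∪ {A₂})) ∧
    (∀ (Γ Δ : Set (Formula σ)) (A : Formula σ) (x : ℕ),
        (∀ B ∈ Γ ∪ Δ, x ∉ B.fv) →
        (Conseq Γ (Δ ∪ {.all x A}) ↔ Conseq Γ (Δ ∪ {A}))) ∧
    (∀ (Γ Δ : Set (Formula σ)) (A : Formula σ) (x : ℕ),
        (∀ B ∈ Γ ∪ Δ, x ∉ B.fv) →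
        (Conseq (Γ ∪ {.ex x A}) Δ ↔ Conseq (Γ ∪ {A}) Δ)) := by
  refine ⟨?_, ?_, ?_, ?_, ?_, ?_⟩
  · intro k P ts hP
    constructor
    · intro h
      have := h (pointStruc P .t hP) (fun _ => ())
      simp only [Set.mem_singleton_iff, forall_eq, exists_eq_left] at this
      simp [Formula.val, pointStruc, Desig, tnot] at this
    · intro h
      have := h (pointStruc P .f hP) (fun _ => ())
      simp only [Set.mem_singleton_iff, forall_eq, exists_eq_left] at this
      simp [Formula.val, pointStruc, Desig, tnot] at this
  · intro Γ Δ A₁ A₂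
    simp only [conseq_union_right, Formula.val, tand_desig, or_and_left, imp_and, forall_and]
  · intro Γ Δ A₁ A₂
    simp only [conseq_union_left, Formula.val, tor_desig, or_imp, imp_and, forall_and]
  · intro Γ Δ A₁ A₂
    rw [conseq_union_right]
    simp only [Conseq, Set.mem_union, Set.mem_singleton_iff, or_and_right, exists_or,
      exists_eq_left, or_imp, forall_and, forall_eq, and_imp, Formula.val, timp_desig]
    refine forall_congr' fun A => forall_congr' fun α => imp_congr_right fun _ => ?_
    by_cases h : A₁.val A α ∈ Desig <;> simp [h]
  · intro Γ Δ A x hx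
    simp only [conseq_union_right, Formula.val, tInf_desig, Set.forall_mem_range]
    constructor
    · intro h M α hΓ
      refine (h M α hΓ).imp_right fun hA => ?_
      simpa using hA (α x)
    · intro h M α hΓ
      by_cases hΔ : ∃ B ∈ Δ, B.val M α ∈ Desig
      · exact Or.inl hΔ
      · refine Or.inr fun d => ?_
        -- Passing to the updated assignment keeps `Γ` designated and `Δ` undesignated.
        refine (h M (Function.update α x d) fun B hB => ?_).resolve_left ?_
        · rw [Formula.val_update M B α x d (hx B (Or.inl hB))]
          exact hΓ B hB
        · rintro ⟨B, hB, hd⟩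
          rw [Formula.val_update M B α x d (hx B (Or.inr hB))] at hd
          exact hΔ ⟨B, hB, hd⟩
  · intro Γ Δ A x hx
    simp only [conseq_union_left, Formula.val, tSup_desig, Set.exists_range_iff]
    constructor
    · intro h M α hΓ hA
      exact h M α hΓ ⟨α x, by simpa using hA⟩
    · rintro h M α hΓ ⟨d, hd⟩
      obtain ⟨B, hB, hBd⟩ := h M (Function.update α x d) (fun B hB => by
        rw [Formula.val_update M B α x d (hx B (Or.inl hB))]
        exact hΓ B hB) hd
      rw [Formula.val_update M B α x d (hx B (Or.inr hB))] at hBd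
      exact ⟨B, hB, hBd⟩

end BD
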